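/- Let s ≥ 0 and n ≥ 1 be integers with s + 1 ∉ B. If n is even with n > N_{s+1}^even, or n is odd with n > N_{s+1}^odd, then g(t_n, t_{n+1}, t_{n+2}; s+1) − g(t_n, t_{n+1}, t_{n+2}; s) = 6(n+1)(n+2)/4. -/

import Mathlib

open Finset

/-- Number of representations of `m` as `∑ i, a i * x i` with nonnegative integers `x i`
(for positive weights `a i`, every solution satisfies `x i ≤ m`). -/
def repCount {k : ℕ} (a : Fin k → ℕ) (m : ℕ) : ℕ :=
  (Finset.univ.filter (fun x : Fin k → Fin (m + 1) => ∑ i, a i * (x i : ℕ) = m)).card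

/-- Representation count extended to the integers (no representations of negative numbers). -/
def repCountZ {k : ℕ} (a : Fin k → ℕ) (m : ℤ) : ℕ :=
  if 0 ≤ m then repCount a m.toNat else 0

/-- The generalized Frobenius number `g(a; s)`: the largest integer having at most `s`
representations by the tuple `a`. -/
noncomputable def genFrob {k : ℕ} (a : Fin k → ℕ) (s : ℕ) : ℤ :=
  sSup {m : ℤ | repCountZ a m ≤ s}

/-- The `n`-th triangular number `t n = n(n+1)/2`. -/
def t (n : ℕ) : ℕ := n * (n + 1) / 2

/-- `N_s^even = 6⌊√(s+1)⌋ - 6`. -/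
def NEven (s : ℕ) : ℤ := 6 * (Nat.sqrt (s + 1) : ℤ) - 6

/-- `N_s^odd = 6⌊(√(4s+5) - 1)/2⌋ - 3`. -/
def NOdd (s : ℕ) : ℤ := 6 * (((Nat.sqrt (4 * s + 5) - 1) / 2 : ℕ) : ℤ) - 3

/-- `δ_s = 1` if `s ≥ ⌊√s⌋² + ⌊√s⌋`, and `0` otherwise. -/
def deltaS (s : ℕ) : ℤ := if Nat.sqrt s ^ 2 + Nat.sqrt s ≤ s then 1 else 0

/-- `q_s = 2⌊√s⌋ + 2 + δ_s`. -/
def qS (s : ℕ) : ℤ := 2 * (Nat.sqrt s : ℤ) + 2 + deltaS s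

/-- `c_s = s - ⌊√s⌋² - δ_s⌊√s⌋`. -/
def cS (s : ℕ) : ℤ := (s : ℤ) - (Nat.sqrt s : ℤ) ^ 2 - deltaS s * (Nat.sqrt s : ℤ)

/-- For `s = k(k+1) + i` with `0 ≤ i ≤ 2k+1`: `x_s^even`. -/
def xEvenN (k i : ℕ) : ℕ := if i ≤ k then i else i - k - 1

/-- For `s = k(k+1) + i` with `0 ≤ i ≤ 2k+1`: `y_s^even`. -/
def yEvenN (k i : ℕ) : ℕ := if i ≤ k then 2 * (k - i) else 4 * k + 3 - 2 * i

/-- For `s = k(k+1) + i` with `0 ≤ i ≤ 2k+1`: `x_s^odd`. -/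
def xOddN (k i : ℕ) : ℕ := if i ≤ k then 2 * i else 2 * (i - k) - 1

/-- For `s = k(k+1) + i` with `0 ≤ i ≤ 2k+1`: `y_s^odd`. -/
def yOddN (k i : ℕ) : ℕ := if i ≤ k then k - i else 2 * k + 1 - i

/-!
Writing `n = 2m` or `n = 2m + 1`, the weights `t n`, `t (n+1)`, `t (n+2)` factor, up to order, as
`pc`, `pq`, `qr` with `p ⟂ qr` and `q ⟂ c`. Two applications of Johnson's formula reduce
`g(pc, pq, qr; s)` to `g(1, c, r; s)` with slope `pq`, and since the weight `1` fills every gap,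
`g(1, c, r; s) + 1` is the `(s+1)`-st smallest value of `cx + ry` on `ℕ²`.

Here `r = 2c + 3` for even `n` and `r = 2c - 3` for odd `n`, so `cx + ry = c(x + 2y) ± 3y`. For
large `n` the values are therefore sorted by the row `w = x + 2y` first, and inside a row they form
an arithmetic progression with difference `3`. Row `w` has `⌊w/2⌋ + 1` points, so the number of
points in the rows below `w` runs through `B`: if `s + 1 ∉ B`, passing from `s` to `s + 1` stays
inside a row, and the Frobenius number grows by `3pq`.
-/

section Representations

variable {k : ℕ}

lemma repCount_comp_perm (a : Fin k → ℕ) (σ : Equiv.Perm (Fin k)) (m : ℕ) :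
    repCount (a ∘ σ) m = repCount a m := by
  refine Finset.card_equiv (σ.arrowCongr (Equiv.refl _)) fun x => ?_
  have hsum : ∑ i, a (σ i) * (x i : ℕ) = ∑ i, a i * (x (σ.symm i) : ℕ) := by
    rw [← Equiv.sum_comp σ fun i => a i * (x (σ.symm i) : ℕ)]
    simp only [Equiv.symm_apply_apply]
  simp only [mem_filter, mem_univ, true_and, Function.comp_apply, Equiv.arrowCongr_apply,
    Equiv.coe_refl, id_eq, hsum]

lemma genFrob_comp_perm (a : Fin k → ℕ) (σ : Equiv.Perm (Fin k)) (s : ℕ) :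
    genFrob (a ∘ σ) s = genFrob a s := by
  simp only [genFrob, repCountZ, repCount_comp_perm]

variable {a : Fin k → ℕ}

lemma repCount_eq_ncard (ha : ∀ i, 0 < a i) (m : ℕ) :
    repCount a m = {x : Fin k → ℕ | ∑ i, a i * x i = m}.ncard := by
  have hinj : Function.Injective fun (x : Fin k → Fin (m + 1)) i => (x i : ℕ) :=
    Fin.val_injective.comp_left
  rw [repCount, ← Set.ncard_coe_finset, ← Set.ncard_image_of_injective _ hinj]
  congr 1
  ext x
  simp only [coe_filter, mem_univ, true_and, Set.mem_image, Set.mem_ofPred_eq]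
  refine ⟨fun ⟨_, hy, hyx⟩ => hyx ▸ hy, fun hx => ?_⟩
  have hle (i : Fin k) : x i ≤ m :=
    calc x i ≤ a i * x i := Nat.le_mul_of_pos_left _ (ha i)
      _ ≤ ∑ i, a i * x i :=
        single_le_sum (f := fun i => a i * x i) (fun _ _ => Nat.zero_le _) (mem_univ i)
      _ = m := hx
  exact ⟨fun i => ⟨x i, Nat.lt_succ_of_le (hle i)⟩, hx, rfl⟩

lemma repCountZ_eq_ncard (ha : ∀ i, 0 < a i) (m : ℤ) :
    repCountZ a m = {x : Fin k → ℕ | ∑ i, (a i : ℤ) * x i = m}.ncard := by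
  rcases le_or_gt 0 m with hm | hm
  · lift m to ℕ using hm
    rw [repCountZ, if_pos (Int.natCast_nonneg m), Int.toNat_natCast, repCount_eq_ncard ha]
    norm_cast
  · have hempty : {x : Fin k → ℕ | ∑ i, (a i : ℤ) * x i = m} = ∅ :=
      Set.eq_empty_of_forall_notMem fun x hx =>
        hm.not_ge (hx ▸ sum_nonneg fun i _ => by positivity)
    rw [repCountZ, if_neg hm.not_ge, hempty, Set.ncard_empty]

end Representations

section Johnson

variable {k d : ℕ} {a b : Fin k → ℕ} {i : Fin k}

lemma sum_mul_update_eq (hi : b i = a i) (hb : ∀ j ≠ i, b j = d * a j) (x : Fin k → ℕ) (z : ℕ) :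
    ∑ j, (b j : ℤ) * (Function.update x i (d * x i + z) j : ℕ) =
      d * ∑ j, (a j : ℤ) * x j + a i * z := by
  have hterm (j : Fin k) : (b j : ℤ) * (Function.update x i (d * x i + z) j : ℕ) =
      d * (a j * x j) + if j = i then (a i : ℤ) * z else 0 := by
    rcases eq_or_ne j i with rfl | hj
    · rw [Function.update_self, if_pos rfl, hi]
      push_cast
      ring
    · rw [Function.update_of_ne hj, if_neg hj, hb j hj]
      push_cast
      ring
  simp only [hterm, sum_add_distrib, mul_sum, sum_ite_eq', mem_univ, if_true]

lemma mod_eq_of_sum_mul_eq (hcop : Nat.Coprime d (a i)) (hi : b i = a i)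
    (hb : ∀ j ≠ i, b j = d * a j) {y : Fin k → ℕ} {z : ℕ} (hz : z < d) {M : ℤ}
    (hy : ∑ j, (b j : ℤ) * y j = d * M + a i * z) : y i % d = z := by
  have hrest : (d : ℤ) ∣ ∑ j ∈ univ.erase i, (b j : ℤ) * y j :=
    dvd_sum fun j hj => by
      rw [hb j (ne_of_mem_erase hj), Nat.cast_mul, mul_assoc]
      exact dvd_mul_right _ _
  have hdvd : (d : ℤ) ∣ a i * (z - y i) := by
    rw [← add_sum_erase _ _ (mem_univ i), hi] at hy
    rw [show (a i : ℤ) * (z - y i) = ∑ j ∈ univ.erase i, (b j : ℤ) * y j - d * M by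
      linear_combination -hy]
    exact dvd_sub hrest (dvd_mul_right _ _)
  have hmod : y i ≡ z [MOD d] :=
    Nat.modEq_iff_dvd.2 ((Nat.isCoprime_iff_coprime.2 hcop).dvd_of_dvd_mul_left hdvd)
  exact Nat.mod_eq_of_modEq hmod hz

lemma repCountZ_mul_add (ha : ∀ j, 0 < a j) (hcop : Nat.Coprime d (a i)) (hi : b i = a i)
    (hb : ∀ j ≠ i, b j = d * a j) {z : ℕ} (hz : z < d) (M : ℤ) :
    repCountZ b (d * M + a i * z) = repCountZ a M := by
  have hd : 0 < d := Nat.zero_lt_of_lt hz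
  have hbpos (j : Fin k) : 0 < b j := by
    rcases eq_or_ne j i with rfl | hj
    · exact hi ▸ ha j
    · exact hb j hj ▸ Nat.mul_pos hd (ha j)
  have hinj : Function.Injective fun x : Fin k → ℕ => Function.update x i (d * x i + z) := by
    intro x y hxy
    funext j
    have hj := congrFun hxy j
    rcases eq_or_ne j i with rfl | hne
    · simpa only [Function.update_self, add_left_inj, mul_right_inj' hd.ne'] using hj
    · simpa only [Function.update_of_ne hne] using hj
  rw [repCountZ_eq_ncard hbpos, repCountZ_eq_ncard ha, eq_comm,
    ← Set.ncard_image_of_injective _ hinj]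
  congr 1
  ext y
  simp only [Set.mem_image, Set.mem_ofPred_eq]
  constructor
  · rintro ⟨x, rfl, rfl⟩
    exact sum_mul_update_eq hi hb x z
  · intro hy
    have hyi : d * (y i / d) + z = y i := by
      rw [← mod_eq_of_sum_mul_eq hcop hi hb hz hy, Nat.div_add_mod]
    have hxy : Function.update (Function.update y i (y i / d)) i
        (d * Function.update y i (y i / d) i + z) = y := by
      rw [Function.update_self, Function.update_idem, hyi, Function.update_eq_self]
    refine ⟨_, ?_, hxy⟩
    rw [← hxy, sum_mul_update_eq hi hb] at hy
    exact mul_left_cancel₀ (Nat.cast_ne_zero.2 hd.ne') (add_right_cancel hy)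

lemma exists_eq_mul_add_mul {c : ℕ} (hd : 0 < d) (hcop : Nat.Coprime d c) (N : ℤ) :
    ∃ (M : ℤ) (z : ℕ), z < d ∧ N = d * M + c * z := by
  obtain ⟨c', hc'⟩ := Int.mod_coprime hcop.symm
  obtain ⟨z, hzd, hz⟩ := Int.existsUnique_equiv_nat (c' * N) (Nat.cast_pos.2 hd)
  have hmod : (c : ℤ) * z ≡ N [ZMOD d] :=
    calc (c : ℤ) * z ≡ c * (c' * N) [ZMOD d] := hz.mul_left _
      _ = c * c' * N := by ring
      _ ≡ 1 * N [ZMOD d] := hc'.mul_right _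
      _ = N := one_mul N
  obtain ⟨M, hM⟩ := hmod.dvd
  exact ⟨M, z, Nat.cast_lt.1 hzd, by linear_combination hM⟩

/-- Johnson's formula, stated with `IsGreatest` because the supremum defining `genFrob` is a junk
value when the set is unbounded. -/
lemma isGreatest_repCountZ_le_mul (ha : ∀ j, 0 < a j) (hd : 0 < d) (hcop : Nat.Coprime d (a i))
    (hi : b i = a i) (hb : ∀ j ≠ i, b j = d * a j) {s : ℕ} {g : ℤ}
    (hg : IsGreatest {m : ℤ | repCountZ a m ≤ s} g) :
    IsGreatest {m : ℤ | repCountZ b m ≤ s} (d * g + a i * (d - 1)) := by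
  constructor
  · have hcount := repCountZ_mul_add ha hcop hi hb (Nat.sub_one_lt_of_lt hd) g
    rw [Nat.cast_sub (Nat.one_le_of_lt hd), Nat.cast_one] at hcount
    exact hcount.trans_le hg.1
  · intro N hN
    obtain ⟨M, z, hz, rfl⟩ := exists_eq_mul_add_mul hd hcop N
    have hM : M ≤ g := hg.2 ((repCountZ_mul_add ha hcop hi hb hz M).symm.trans_le hN)
    have hz' : (z : ℤ) ≤ d - 1 := by omega
    gcongr

end Johnson

section UnitWeight

variable {k : ℕ} {b : Fin k → ℕ}

lemma repCountZ_vecCons_one (hb : ∀ i, 0 < b i) (M : ℤ) :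
    repCountZ (Matrix.vecCons 1 b) M = {x : Fin k → ℕ | ∑ i, (b i : ℤ) * x i ≤ M}.ncard := by
  have hinj : Function.Injective fun x : Fin k → ℕ =>
      Matrix.vecCons (M - ∑ i, (b i : ℤ) * x i).toNat x :=
    fun x y hxy => congrArg Matrix.vecTail hxy
  rw [repCountZ_eq_ncard (Fin.cases Nat.one_pos hb), eq_comm,
    ← Set.ncard_image_of_injective _ hinj]
  congr 1
  ext y
  simp only [Set.mem_image, Set.mem_ofPred_eq, Fin.sum_univ_succ, Matrix.cons_val_zero,
    Matrix.cons_val_succ, Nat.cast_one, one_mul]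
  constructor
  · rintro ⟨x, hx, rfl⟩
    simp only [Matrix.cons_val_zero, Matrix.cons_val_succ]
    omega
  · intro hy
    refine ⟨Matrix.vecTail y, ?_, ?_⟩
    · simp only [Matrix.vecTail, Function.comp_apply]
      omega
    · funext i
      refine Fin.cases ?_ (fun _ => rfl) i
      simp only [Matrix.cons_val_zero, Matrix.vecTail, Function.comp_apply]
      omega

lemma finite_setOf_sum_mul_le (hb : ∀ i, 0 < b i) (M : ℤ) :
    {x : Fin k → ℕ | ∑ i, (b i : ℤ) * x i ≤ M}.Finite := by
  refine (Set.finite_Iic fun _ : Fin k => M.toNat).subset fun x hx i => ?_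
  have hle : (x i : ℤ) ≤ M :=
    calc (x i : ℤ) ≤ b i * x i := by
          exact_mod_cast Nat.le_mul_of_pos_left _ (hb i)
      _ ≤ ∑ i, (b i : ℤ) * x i :=
          single_le_sum (f := fun i => (b i : ℤ) * x i) (fun _ _ => by positivity) (mem_univ i)
      _ ≤ M := hx
  exact Int.ofNat_le.1 (hle.trans (Int.self_le_toNat M))

/- If the points of `S` come first when `ℕᵏ` is listed by increasing weight, and `x₀` is the next
one, then `S` contains every point of weight less than that of `x₀`, whereas the points of
`insert x₀ S` all have weight at most that of `x₀`. -/
lemma isGreatest_repCountZ_vecCons_one (hb : ∀ i, 0 < b i) {S : Finset (Fin k → ℕ)}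
    {x₀ : Fin k → ℕ} (hx₀ : x₀ ∉ S)
    (hS : ∀ x ∈ S, ∑ i, (b i : ℤ) * x i ≤ ∑ i, (b i : ℤ) * x₀ i)
    (hSc : ∀ x ∉ S, ∑ i, (b i : ℤ) * x₀ i ≤ ∑ i, (b i : ℤ) * x i) :
    IsGreatest {m : ℤ | repCountZ (Matrix.vecCons 1 b) m ≤ #S}
      (∑ i, (b i : ℤ) * x₀ i - 1) := by
  simp only [repCountZ_vecCons_one hb]
  constructor
  · rw [Set.mem_ofPred_eq, ← Set.ncard_coe_finset]
    refine Set.ncard_le_ncard (fun x hx => ?_) S.finite_toSet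
    by_contra hxS
    exact (Int.lt_of_le_sub_one hx).not_ge (hSc x hxS)
  · intro M hM
    by_contra! hlt
    have hsub : ((insert x₀ S : Finset (Fin k → ℕ)) : Set (Fin k → ℕ)) ⊆
        {x | ∑ i, (b i : ℤ) * x i ≤ M} := by
      intro x hx
      have hle : ∑ i, (b i : ℤ) * x i ≤ ∑ i, (b i : ℤ) * x₀ i := by
        rcases mem_insert.1 hx with rfl | hxS
        exacts [le_rfl, hS x hxS]
      exact hle.trans (Int.le_of_sub_one_lt hlt)
    have hcard := Set.ncard_le_ncard hsub (finite_setOf_sum_mul_le hb M)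
    rw [Set.ncard_coe_finset, card_insert_of_notMem hx₀] at hcard
    exact hcard.not_gt (Nat.lt_succ_of_le hM)

end UnitWeight

section Rows

/-- The number of points of `ℕ²` with `x + 2y < w`. For `w ≥ 1` these numbers are exactly the
squares `k²` and the products `k(k+1)` with `k ≥ 1`, that is, the exceptional set `B`. -/
def triangleCard (w : ℕ) : ℕ := (w + 1) / 2 * (w / 2 + 1)

lemma triangleCard_succ (w : ℕ) : triangleCard (w + 1) = triangleCard w + (w / 2 + 1) := by
  rw [triangleCard, triangleCard, show (w + 1 + 1) / 2 = w / 2 + 1 by omega]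
  ring

lemma exists_eq_triangleCard_add (s : ℕ) : ∃ w i, i ≤ w / 2 ∧ s = triangleCard w + i := by
  induction s with
  | zero => exact ⟨0, 0, le_rfl, rfl⟩
  | succ s ih =>
    obtain ⟨w, i, hi, rfl⟩ := ih
    rcases hi.lt_or_eq with hlt | rfl
    · exact ⟨w, i + 1, hlt, rfl⟩
    · exact ⟨w + 1, 0, Nat.zero_le _, (triangleCard_succ w).symm⟩

lemma exists_triangleCard_succ_eq_sq_or_mul (w : ℕ) :
    ∃ k, 1 ≤ k ∧ (triangleCard (w + 1) = k ^ 2 ∨ triangleCard (w + 1) = k * (k + 1)) := by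
  refine ⟨w / 2 + 1, Nat.succ_pos _, ?_⟩
  rw [triangleCard, show (w + 1 + 1) / 2 = w / 2 + 1 by omega]
  rcases Nat.even_or_odd' w with ⟨j, rfl | rfl⟩
  · left
    rw [show (2 * j + 1) / 2 = 2 * j / 2 by omega, sq]
  · right
    rw [show (2 * j + 1 + 1) / 2 = (2 * j + 1) / 2 + 1 by omega]

lemma exists_eq_triangleCard_add_of_notMem {s : ℕ}
    (hs : ¬ ∃ k, 1 ≤ k ∧ (s + 1 = k ^ 2 ∨ s + 1 = k * (k + 1))) :
    ∃ w i, i + 1 ≤ w / 2 ∧ s = triangleCard w + i := by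
  obtain ⟨w, i, hi, rfl⟩ := exists_eq_triangleCard_add s
  refine ⟨w, i, hi.lt_of_ne ?_, rfl⟩
  rintro rfl
  exact hs (add_assoc (triangleCard w) _ 1 ▸ triangleCard_succ w ▸
    exists_triangleCard_succ_eq_sq_or_mul w)

/-- The points of `ℕ²` with `x + 2y < w`, together with those points of the line `x + 2y = w`
whose second coordinate lies in `J`. The box `[0, w]²` only serves to make this a `Finset`. -/
def partialTriangle (w : ℕ) (J : Finset ℕ) : Finset (Fin 2 → ℕ) :=
  {x ∈ Fintype.piFinset fun _ => range (w + 1) |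
    x 0 + 2 * x 1 < w ∨ x 0 + 2 * x 1 = w ∧ x 1 ∈ J}

lemma mem_partialTriangle {w : ℕ} {J : Finset ℕ} {x : Fin 2 → ℕ} :
    x ∈ partialTriangle w J ↔ x 0 + 2 * x 1 < w ∨ x 0 + 2 * x 1 = w ∧ x 1 ∈ J := by
  simp only [partialTriangle, mem_filter, Fintype.mem_piFinset, mem_range, Fin.forall_fin_two]
  refine and_iff_right_of_imp ?_
  rintro (h | ⟨h, -⟩) <;> omega

lemma partialTriangle_succ_empty (w : ℕ) :
    partialTriangle (w + 1) ∅ = partialTriangle w (range (w / 2 + 1)) := by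
  ext x
  simp only [mem_partialTriangle, notMem_empty, and_false, or_false, mem_range]
  omega

lemma card_partialTriangle_eq_add {w : ℕ} {J : Finset ℕ} (hJ : J ⊆ range (w / 2 + 1)) :
    #(partialTriangle w J) = #(partialTriangle w ∅) + #J := by
  have hinj : Function.Injective fun j : ℕ => ![w - 2 * j, j] :=
    fun j j' h => congrFun h 1
  have hline (x : Fin 2 → ℕ) : x ∈ J.image (fun j => ![w - 2 * j, j]) ↔
      x 0 + 2 * x 1 = w ∧ x 1 ∈ J := by
    simp only [mem_image, funext_iff, Fin.forall_fin_two, Matrix.cons_val_zero,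
      Matrix.cons_val_one]
    constructor
    · rintro ⟨j, hj, h0, rfl⟩
      have := mem_range.1 (hJ hj)
      exact ⟨by omega, hj⟩
    · rintro ⟨hw, hx⟩
      exact ⟨x 1, hx, by omega, rfl⟩
  have hdisj : Disjoint (partialTriangle w ∅) (J.image fun j => ![w - 2 * j, j]) := by
    refine disjoint_left.2 fun x hx hx' => ?_
    simp only [mem_partialTriangle, notMem_empty, and_false, or_false] at hx
    exact hx.ne ((hline x).1 hx').1
  rw [← card_image_of_injective J hinj, ← card_union_of_disjoint hdisj]
  congr 1
  ext x
  simp only [mem_union, hline, mem_partialTriangle, notMem_empty, and_false, or_false]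

lemma card_partialTriangle_empty (w : ℕ) : #(partialTriangle w ∅) = triangleCard w := by
  induction w with
  | zero => rfl
  | succ w ih =>
    rw [partialTriangle_succ_empty, card_partialTriangle_eq_add Subset.rfl, ih, card_range,
      triangleCard_succ]

lemma isGreatest_repCountZ_of_row {c r w j : ℕ} {k : ℤ} {J : Finset ℕ} (hc : 0 < c) (hr : 0 < r)
    (hk : (r : ℤ) = 2 * c + k) (hJ : J ⊆ range (w / 2 + 1)) (hj : j ≤ w / 2) (hjJ : j ∉ J)
    (hmem : ∀ y ∈ J, k * y ≤ k * j) (hnotMem : ∀ y ∉ J, y ≤ w / 2 → k * j ≤ k * y)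
    (hprev : ∀ v < w, ∀ y ≤ v / 2, (c * v + k * y : ℤ) ≤ c * w + k * j)
    (hnext : ∀ v > w, ∀ y ≤ v / 2, (c * w + k * j : ℤ) ≤ c * v + k * y) :
    IsGreatest {m : ℤ | repCountZ ![1, c, r] m ≤ triangleCard w + #J} (c * w + k * j - 1) := by
  have hweight (x : Fin 2 → ℕ) : ∑ i, ((![c, r] i : ℕ) : ℤ) * x i =
      c * (x 0 + 2 * x 1 : ℕ) + k * x 1 := by
    simp only [Fin.sum_univ_two, Matrix.cons_val_zero, Matrix.cons_val_one]
    push_cast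
    linear_combination (x 1 : ℤ) * hk
  have hx₀ : ∑ i, ((![c, r] i : ℕ) : ℤ) * (![w - 2 * j, j] i : ℕ) = c * w + k * j := by
    rw [hweight]
    simp only [Matrix.cons_val_zero, Matrix.cons_val_one]
    rw [Nat.sub_add_cancel (by omega)]
  have hx₀_notMem : ![w - 2 * j, j] ∉ partialTriangle w J := by
    simp only [mem_partialTriangle, Matrix.cons_val_zero, Matrix.cons_val_one, hjJ, and_false,
      or_false]
    omega
  rw [← card_partialTriangle_empty, ← card_partialTriangle_eq_add hJ, ← hx₀]
  refine isGreatest_repCountZ_vecCons_one (Fin.forall_fin_two.2 ⟨hc, hr⟩) hx₀_notMem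
    (fun x hx => ?_) (fun x hx => ?_)
  · rw [hx₀, hweight]
    rcases mem_partialTriangle.1 hx with hlt | ⟨hw, hxJ⟩
    · exact hprev _ hlt _ (by omega)
    · rw [hw]
      exact add_le_add_right (hmem _ hxJ) _
  · rw [hx₀, hweight]
    rcases lt_trichotomy (x 0 + 2 * x 1) w with hlt | hw | hgt
    · exact absurd (mem_partialTriangle.2 (Or.inl hlt)) hx
    · have hxJ : x 1 ∉ J := fun h => hx (mem_partialTriangle.2 (Or.inr ⟨hw, h⟩))
      rw [hw]
      exact add_le_add_right (hnotMem _ hxJ (by omega)) _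
    · exact hnext _ hgt _ (by omega)

lemma isGreatest_repCountZ_two_mul_add {c k w i : ℕ} (hc : 0 < c) (hi : i ≤ w / 2)
    (hprev : k * ((w - 1) / 2) ≤ c + k * i) (hnext : k * i ≤ c) :
    IsGreatest {m : ℤ | repCountZ ![1, c, 2 * c + k] m ≤ triangleCard w + i}
      (c * w + k * i - 1) := by
  have key := isGreatest_repCountZ_of_row (r := 2 * c + k) (J := range i) (k := k) hc (by omega)
    (by push_cast; rfl) (range_subset_range.2 (by omega)) hi notMem_range_self
    (fun y hy => by gcongr; exact (mem_range.1 hy).le)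
    (fun y hy _ => by gcongr; exact not_lt.1 (mt mem_range.2 hy)) ?_ ?_
  · rwa [card_range] at key
  · intro v hv y hy
    have hyw : y ≤ (w - 1) / 2 := by omega
    norm_cast
    calc c * v + k * y ≤ c * v + k * ((w - 1) / 2) := by gcongr
      _ ≤ c * (v + 1) + k * i := by linarith
      _ ≤ c * w + k * i := by gcongr; exact hv
  · intro v hv y _
    norm_cast
    calc c * w + k * i ≤ c * (w + 1) := by linarith
      _ ≤ c * v := by gcongr; exact hv
      _ ≤ c * v + k * y := Nat.le_add_right _ _

lemma isGreatest_repCountZ_of_add_eq_two_mul {c k r w i : ℕ} (hr : 0 < r) (hrk : r + k = 2 * c)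
    (hkc : k ≤ c) (hi : i ≤ w / 2) (hprev : k * (w / 2 - i) ≤ c) (hnext : k * (w % 2 + i) ≤ c) :
    IsGreatest {m : ℤ | repCountZ ![1, c, r] m ≤ triangleCard w + i}
      (c * w - k * (w / 2 - i : ℕ) - 1) := by
  have key := isGreatest_repCountZ_of_row (c := c) (r := r) (k := -k) (j := w / 2 - i)
    (J := Ioc (w / 2 - i) (w / 2)) (by omega) hr (by omega)
    (fun y hy => by simp only [mem_Ioc, mem_range] at *; omega)
    (Nat.sub_le _ _) left_notMem_Ioc
    (fun y hy => by
      rw [neg_mul, neg_mul]; gcongr; exact (mem_Ioc.1 hy).1.le)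
    (fun y hy hyw => by
      rw [neg_mul, neg_mul]; gcongr; exact not_lt.1 fun h => hy (mem_Ioc.2 ⟨h, hyw⟩)) ?_ ?_
  · rwa [Nat.card_Ioc, Nat.sub_sub_self hi, neg_mul, ← sub_eq_add_neg] at key
  · intro v hv y _
    have hrow : c * v + c ≤ c * w := Nat.mul_le_mul_left c hv
    have hky : 0 ≤ (k : ℤ) * y := by positivity
    zify at hprev hrow
    linarith
  · intro v hv y hy
    obtain ⟨d, rfl⟩ : ∃ d, v = w + 1 + d := Nat.exists_eq_add_of_le hv
    have hyd : y ≤ (w / 2 - i) + (w % 2 + i) + d := by omega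
    have hkd : k * d ≤ c * d := Nat.mul_le_mul_right d hkc
    have hky : k * y ≤ k * (w / 2 - i) + c + c * d :=
      calc k * y ≤ k * ((w / 2 - i) + (w % 2 + i) + d) := by gcongr
        _ = k * (w / 2 - i) + k * (w % 2 + i) + k * d := by ring
        _ ≤ k * (w / 2 - i) + c + c * d := by gcongr
    zify at hky
    push_cast
    linarith

end Rows

section Triangular

lemma t_two_mul (m : ℕ) : t (2 * m) = m * (2 * m + 1) := by
  rw [t, mul_assoc, Nat.mul_div_cancel_left _ two_pos]

lemma t_two_mul_add_one (m : ℕ) : t (2 * m + 1) = (2 * m + 1) * (m + 1) := by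
  rw [t, show (2 * m + 1) * (2 * m + 1 + 1) = 2 * ((2 * m + 1) * (m + 1)) by ring,
    Nat.mul_div_cancel_left _ two_pos]

lemma genFrob_eq_of_isGreatest_repCountZ {p q c r s : ℕ} {g : ℤ} (hp : 0 < p) (hq : 0 < q)
    (hc : 0 < c) (hr : 0 < r) (hpqr : Nat.Coprime p (q * r)) (hqc : Nat.Coprime q c)
    (hg : IsGreatest {m : ℤ | repCountZ ![1, c, r] m ≤ s} g) :
    genFrob ![p * c, p * q, q * r] s = p * (q * g + c * (q - 1)) + q * r * (p - 1) := by
  have hq_step : IsGreatest {m : ℤ | repCountZ ![q, c, q * r] m ≤ s} (q * g + c * (q - 1)) :=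
    isGreatest_repCountZ_le_mul (a := ![1, c, r]) (b := ![q, c, q * r]) (i := 1)
      (by simp [Fin.forall_fin_succ, hc, hr]) hq hqc rfl (by simp [Fin.forall_fin_succ]) hg
  have hp_step : IsGreatest {m : ℤ | repCountZ ![p * q, p * c, q * r] m ≤ s}
      (p * (q * g + c * (q - 1)) + (q * r : ℕ) * (p - 1)) :=
    isGreatest_repCountZ_le_mul (a := ![q, c, q * r]) (b := ![p * q, p * c, q * r]) (i := 2)
      (by simp [Fin.forall_fin_succ, hq, hc, hr]) hp hpqr rfl
      (by simp [Fin.forall_fin_succ]) hq_step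
  have hperm : ![p * c, p * q, q * r] = ![p * q, p * c, q * r] ∘ Equiv.swap (0 : Fin 3) 1 := by
    funext j
    fin_cases j <;> rfl
  rw [hperm, genFrob_comp_perm, genFrob, hp_step.csSup_eq, Nat.cast_mul]

lemma genFrob_t_two_mul {m w i : ℕ} (hm : 0 < m) (hi : i ≤ w / 2)
    (hprev : 3 * ((w - 1) / 2) ≤ m + 3 * i) (hnext : 3 * i ≤ m) :
    genFrob ![t (2 * m), t (2 * m + 1), t (2 * m + 2)] (triangleCard w + i) =
      (2 * m + 1) * ((m + 1) * (m * w + 3 * i - 1) + m * m) +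
        (m + 1) * (2 * m + 3) * (2 * m) := by
  have hpqr : Nat.Coprime (2 * m + 1) ((m + 1) * (2 * m + 3)) :=
    Nat.isCoprime_iff_coprime.1 ⟨-(m + 2), 1, by push_cast; ring⟩
  have hqc : Nat.Coprime (m + 1) m := by simp
  rw [t_two_mul, t_two_mul_add_one, show 2 * m + 2 = 2 * (m + 1) by ring, t_two_mul, mul_comm m,
    show 2 * (m + 1) + 1 = 2 * m + 3 by ring,
    genFrob_eq_of_isGreatest_repCountZ (by omega) (by omega) hm (by omega) hpqr hqc
      (isGreatest_repCountZ_two_mul_add hm hi hprev hnext)]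
  push_cast
  ring

lemma genFrob_t_two_mul_add_one {m w i : ℕ} (hm : 0 < m) (hi : i ≤ w / 2)
    (hprev : 3 * (w / 2 - i) ≤ m + 2) (hnext : 3 * (w % 2 + i) ≤ m + 2) :
    genFrob ![t (2 * m + 1), t (2 * m + 2), t (2 * m + 3)] (triangleCard w + i) =
      (2 * m + 3) * ((m + 1) * ((m + 2) * w - 3 * (w / 2 - i : ℕ) - 1) + (m + 2) * m) +
        (m + 1) * (2 * m + 1) * (2 * m + 2) := by
  have hpqr : Nat.Coprime (2 * m + 3) ((m + 1) * (2 * m + 1)) :=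
    Nat.isCoprime_iff_coprime.1 ⟨-m, 1, by push_cast; ring⟩
  have hqc : Nat.Coprime (m + 1) (m + 2) :=
    Nat.isCoprime_iff_coprime.1 ⟨-1, 1, by push_cast; ring⟩
  have hrev : ![t (2 * m + 1), t (2 * m + 2), t (2 * m + 3)] =
      ![t (2 * m + 3), t (2 * m + 2), t (2 * m + 1)] ∘ (Fin.revPerm : Equiv.Perm (Fin 3)) := by
    funext j
    fin_cases j <;> rfl
  rw [hrev, genFrob_comp_perm, show 2 * m + 3 = 2 * (m + 1) + 1 by ring, t_two_mul_add_one,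
    show 2 * m + 2 = 2 * (m + 1) by ring, t_two_mul, t_two_mul_add_one,
    show 2 * (m + 1) + 1 = 2 * m + 3 by ring, mul_comm (m + 1) (2 * m + 3),
    mul_comm (2 * m + 1) (m + 1),
    genFrob_eq_of_isGreatest_repCountZ (by omega) (by omega) (by omega) (by omega) hpqr hqc
      (isGreatest_repCountZ_of_add_eq_two_mul (by omega) (k := 3) (by ring) (by omega) hi hprev
        hnext)]
  push_cast
  ring

lemma genFrob_t_two_mul_sub {m w i : ℕ} (hi : i + 1 ≤ w / 2)
    (hprev : 3 * ((w - 1) / 2) ≤ m + 3 * i) (hnext : 3 * (i + 1) ≤ m) :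
    genFrob ![t (2 * m), t (2 * m + 1), t (2 * m + 2)] (triangleCard w + i + 1) -
        genFrob ![t (2 * m), t (2 * m + 1), t (2 * m + 2)] (triangleCard w + i) =
      3 * (2 * m + 1) * (m + 1) := by
  rw [add_assoc, genFrob_t_two_mul (by omega) hi (by omega) hnext,
    genFrob_t_two_mul (by omega) (by omega) hprev (by omega)]
  push_cast
  ring

lemma genFrob_t_two_mul_add_one_sub {m w i : ℕ} (hi : i + 1 ≤ w / 2)
    (hprev : 3 * (w / 2 - i) ≤ m + 2) (hnext : 3 * (w % 2 + (i + 1)) ≤ m + 2) :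
    genFrob ![t (2 * m + 1), t (2 * m + 2), t (2 * m + 3)] (triangleCard w + i + 1) -
        genFrob ![t (2 * m + 1), t (2 * m + 2), t (2 * m + 3)] (triangleCard w + i) =
      3 * (m + 1) * (2 * m + 3) := by
  rw [add_assoc, genFrob_t_two_mul_add_one (by omega) hi (by omega) hnext,
    genFrob_t_two_mul_add_one (by omega) (by omega) hprev (by omega)]
  push_cast [hi, Nat.le_of_succ_le hi]
  ring

end Triangular

section Thresholds

lemma le_NEven {h s : ℕ} (hs : h ^ 2 ≤ s + 1) : 6 * (h : ℤ) - 6 ≤ NEven s := by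
  have hsqrt : h ≤ Nat.sqrt (s + 1) := Nat.le_sqrt'.2 hs
  rw [NEven]
  omega

lemma le_NOdd {h s : ℕ} (hs : h * (h + 1) ≤ s + 1) : 6 * (h : ℤ) - 3 ≤ NOdd s := by
  have hsqrt : 2 * h + 1 ≤ Nat.sqrt (4 * s + 5) := Nat.le_sqrt'.2 (by linarith)
  rw [NOdd]
  omega

lemma bounds_of_NEven_lt {m w i : ℕ} (hi : i + 1 ≤ w / 2)
    (hN : NEven (triangleCard w + i + 1) < (2 * m : ℕ)) :
    3 * ((w - 1) / 2) ≤ m + 3 * i ∧ 3 * (i + 1) ≤ m := by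
  have hw : ((w + 1) / 2) ^ 2 ≤ triangleCard w := by
    rw [sq]
    exact Nat.mul_le_mul_left _ (by omega)
  have hi' : (i + 1) * (i + 2) ≤ triangleCard w := Nat.mul_le_mul (by omega) (by omega)
  have hNw : 6 * (((w + 1) / 2 : ℕ) : ℤ) - 6 ≤ NEven (triangleCard w + i + 1) :=
    le_NEven (by omega)
  have hNi : 6 * ((i + 2 : ℕ) : ℤ) - 6 ≤ NEven (triangleCard w + i + 1) :=
    le_NEven (by linarith)
  omega

lemma bounds_of_NOdd_lt {m w i : ℕ} (hi : i + 1 ≤ w / 2)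
    (hN : NOdd (triangleCard w + i + 1) < (2 * m + 1 : ℕ)) :
    3 * (w / 2 - i) ≤ m + 2 ∧ 3 * (w % 2 + (i + 1)) ≤ m + 2 := by
  have hw : w / 2 * (w / 2 + 1) ≤ triangleCard w := Nat.mul_le_mul_right _ (by omega)
  have hi' : (w % 2 + (i + 1)) * (i + 2) ≤ triangleCard w :=
    Nat.mul_le_mul (by omega) (by omega)
  have hNw : 6 * ((w / 2 : ℕ) : ℤ) - 3 ≤ NOdd (triangleCard w + i + 1) := le_NOdd (by omega)
  have hNi : 6 * ((w % 2 + (i + 1) : ℕ) : ℤ) - 3 ≤ NOdd (triangleCard w + i + 1) := by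
    apply le_NOdd
    rcases Nat.mod_two_eq_zero_or_one w with h | h <;> rw [h] at hi' ⊢ <;> linarith
  omega

end Thresholds

/-- if `s+1 ∉ B` then, for even `n > N_{s+1}^even` or odd `n > N_{s+1}^odd`,
`g(…; s+1) - g(…; s) = 6(n+1)(n+2)/4`. -/
theorem stmt_2 (s n : ℕ) (hn : 1 ≤ n)
    (hB : ¬ ∃ k : ℕ, 1 ≤ k ∧ (s + 1 = k ^ 2 ∨ s + 1 = k * (k + 1)))
    (hcase : (Even n ∧ (n : ℤ) > NEven (s + 1)) ∨ (Odd n ∧ (n : ℤ) > NOdd (s + 1))) :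
    genFrob ![t n, t (n + 1), t (n + 2)] (s + 1) - genFrob ![t n, t (n + 1), t (n + 2)] s =
      6 * ((n : ℤ) + 1) * ((n : ℤ) + 2) / 4 := by
  obtain ⟨w, i, hi, rfl⟩ := exists_eq_triangleCard_add_of_notMem hB
  rcases hcase with ⟨heven, hN⟩ | ⟨⟨m, rfl⟩, hN⟩
  · obtain ⟨m, rfl⟩ := heven.two_dvd
    obtain ⟨hprev, hnext⟩ := bounds_of_NEven_lt hi hN
    rw [genFrob_t_two_mul_sub hi hprev hnext]
    exact Int.eq_ediv_of_mul_eq_right four_ne_zero (by push_cast; ring)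
  · obtain ⟨hprev, hnext⟩ := bounds_of_NOdd_lt hi hN
    rw [genFrob_t_two_mul_add_one_sub hi hprev hnext]
    exact Int.eq_ediv_of_mul_eq_right four_ne_zero (by push_cast; ring)
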